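/- arXiv:2305.13065 — 3 statements merged into one kernel-verified Lean document; each statement's English description precedes it below -/
import Mathlib

section
/- Let u_n ∈ ℝ^Q, Δt ∈ ℝ, and suppose the vectors u⁰,…,uᴹ ∈ ℝ^Q and G⁰,…,Gᴹ ∈ ℝ^Q satisfy, for every ℓ ∈ {0,…,M}, the ADER implicit weak form Σ_{m=0}^{M} B_{ℓm} uᵐ = ψ̂ˡ(0)·u_n + Δt Σ_{m=0}^{M} Λ_{ℓm} Gᵐ. Then the interpolated end value coincides with the Runge–Kutta-type update with weights w: Σ_{m=0}^{M} ψ̂ᵐ(1)·uᵐ = u_n + Δt Σ_{m=0}^{M} w_m Gᵐ. -/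
/-!
The weak form is linear in its test polynomial, so it extends from the basis to its span. Every
polynomial of degree at most `M`, in particular the constant `1`, is in the span of a Lagrange basis
at `M + 1` nodes, and testing with `1` makes the derivative term of the weak form vanish.
-/

open Polynomial

section NodalBasis

variable {R ι : Type*} [CommRing R] [IsDomain R] [Fintype ι] [DecidableEq ι]
  {v : ι → R} {ψ : ι → R[X]}

theorem sum_eval_smul_nodal_eq (hv : Function.Injective v)
    (hdeg : ∀ l, (ψ l).degree < Fintype.card ι)
    (heval : ∀ l m, (ψ l).eval (v m) = if l = m then 1 else 0)
    {p : R[X]} (hp : p.degree < Fintype.card ι) :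
    ∑ l, p.eval (v l) • ψ l = p := by
  have hsum : (∑ l, p.eval (v l) • ψ l).degree < Fintype.card ι :=
    mem_degreeLT.1 <| Submodule.sum_smul_mem _ _ fun l _ => mem_degreeLT.2 (hdeg l)
  refine eq_of_degrees_lt_of_eval_index_eq Finset.univ hv.injOn hsum hp fun m _ => ?_
  simp [eval_finsetSum, heval]

theorem mem_span_nodal (hv : Function.Injective v)
    (hdeg : ∀ l, (ψ l).degree < Fintype.card ι)
    (heval : ∀ l m, (ψ l).eval (v m) = if l = m then 1 else 0)
    {p : R[X]} (hp : p.degree < Fintype.card ι) :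
    p ∈ Submodule.span R (Set.range ψ) :=
  (Submodule.mem_span_range_iff_exists_fun R).2
    ⟨fun l => p.eval (v l), sum_eval_smul_nodal_eq hv hdeg heval hp⟩

end NodalBasis

section WeakForm

variable (a b : ℝ)

/-- Integration of polynomials over `[a, b]`, as a linear functional. -/
noncomputable def polyIntegral : ℝ[X] →ₗ[ℝ] ℝ where
  toFun p := ∫ x in a..b, p.eval x
  map_add' p q := by
    simp only [eval_add]
    exact intervalIntegral.integral_add (p.continuous.intervalIntegrable a b)
      (q.continuous.intervalIntegrable a b)
  map_smul' c p := by
    simp only [eval_smul, RingHom.id_apply, intervalIntegral.integral_smul]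

/-- The `L²` pairing `(p, q) ↦ ∫ p q` over `[a, b]`. Its matrix in a basis of polynomials on
`[0, 1]` is the ADER matrix `Λ`. -/
noncomputable def massForm : ℝ[X] →ₗ[ℝ] ℝ[X] →ₗ[ℝ] ℝ :=
  (LinearMap.mul ℝ ℝ[X]).compr₂ (polyIntegral a b)

/-- The bilinear form `(p, q) ↦ p(b) q(b) - ∫ p' q` over `[a, b]`, with the test polynomial first:
the time derivative of `q` after integration by parts, without the boundary term at `a`. Its matrix
in a basis of polynomials on `[0, 1]` is the ADER matrix `B`. -/
noncomputable def aderForm : ℝ[X] →ₗ[ℝ] ℝ[X] →ₗ[ℝ] ℝ :=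
  (LinearMap.mul ℝ ℝ[X]).compr₂ (leval b) - massForm a b ∘ₗ derivative

variable {a b}

theorem massForm_apply (p q : ℝ[X]) :
    massForm a b p q = ∫ x in a..b, p.eval x * q.eval x := by
  simp only [massForm, LinearMap.compr₂_apply, LinearMap.mul_apply', polyIntegral,
    LinearMap.coe_mk, AddHom.coe_mk, eval_mul]

theorem aderForm_apply (p q : ℝ[X]) :
    aderForm a b p q =
      p.eval b * q.eval b - ∫ x in a..b, p.derivative.eval x * q.eval x := by
  simp only [aderForm, LinearMap.sub_apply, LinearMap.compr₂_apply, LinearMap.mul_apply',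
    leval_apply, eval_mul, LinearMap.comp_apply, massForm_apply]

theorem massForm_one_left (q : ℝ[X]) : massForm a b 1 q = ∫ x in a..b, q.eval x := by
  simp only [massForm_apply, eval_one, one_mul]

theorem aderForm_one_left (q : ℝ[X]) : aderForm a b 1 q = q.eval b := by
  simp [aderForm_apply]

variable {ι E : Type*} [Fintype ι] [AddCommGroup E] [Module ℝ E]
  {φ : ι → ℝ[X]} {un : E} {Δt : ℝ} {u g : ι → E}

theorem ader_weak_form_of_mem_span {S : Set ℝ[X]}
    (hS : ∀ p ∈ S, ∑ m, aderForm a b p (φ m) • u m =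
      p.eval a • un + Δt • ∑ m, massForm a b p (φ m) • g m)
    {p : ℝ[X]} (hp : p ∈ Submodule.span ℝ S) :
    ∑ m, aderForm a b p (φ m) • u m =
      p.eval a • un + Δt • ∑ m, massForm a b p (φ m) • g m := by
  let lhs : ℝ[X] →ₗ[ℝ] E := ∑ m, ((aderForm a b).flip (φ m)).smulRight (u m)
  let rhs : ℝ[X] →ₗ[ℝ] E :=
    (leval a).smulRight un + Δt • ∑ m, ((massForm a b).flip (φ m)).smulRight (g m)
  have heq : Set.EqOn lhs rhs S := fun p hpS => by simpa [lhs, rhs] using hS p hpS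
  simpa [lhs, rhs] using LinearMap.eqOn_span heq hp

theorem ader_iwf_final_update_general {ψ : ι → ℝ[X]}
    (hone : 1 ∈ Submodule.span ℝ (Set.range ψ))
    (hsys : ∀ l, ∑ m, aderForm a b (ψ l) (ψ m) • u m =
      (ψ l).eval a • un + Δt • ∑ m, massForm a b (ψ l) (ψ m) • g m) :
    ∑ m, (ψ m).eval b • u m = un + Δt • ∑ m, (∫ x in a..b, (ψ m).eval x) • g m := by
  have htest := ader_weak_form_of_mem_span (Set.forall_mem_range.2 hsys) hone
  simpa only [aderForm_one_left, massForm_one_left, eval_one, one_smul] using htest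

end WeakForm

/-- If (u⁰,…,uᴹ) and (G⁰,…,Gᴹ) satisfy the ADER implicit weak form, then the interpolated
end value coincides with the Runge–Kutta update with weights w. -/
theorem ader_iwf_final_update
    (M : ℕ) (hM : 1 ≤ M)
    (ξ : Fin (M + 1) → ℝ)
    (hξ01 : ∀ m, ξ m ∈ Set.Icc (0 : ℝ) 1)
    (hξmono : StrictMono ξ)
    (ψ : Fin (M + 1) → Polynomial ℝ)
    (hψdeg : ∀ l, (ψ l).natDegree ≤ M)
    (hψeval : ∀ l m, (ψ l).eval (ξ m) = if l = m then 1 else 0)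
    (Bmat Lam : Matrix (Fin (M + 1)) (Fin (M + 1)) ℝ)
    (hB : ∀ l m, Bmat l m = (ψ l).eval 1 * (ψ m).eval 1 -
        ∫ x in (0 : ℝ)..1, (ψ l).derivative.eval x * (ψ m).eval x)
    (hLam : ∀ l m, Lam l m = ∫ x in (0 : ℝ)..1, (ψ l).eval x * (ψ m).eval x)
    (w : Fin (M + 1) → ℝ)
    (hw : ∀ m, w m = ∫ x in (0 : ℝ)..1, (ψ m).eval x)
    (Q : ℕ) (un : Fin Q → ℝ) (Δt : ℝ)
    (u g : Fin (M + 1) → Fin Q → ℝ)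
    (hsys : ∀ l, ∑ m, Bmat l m • u m = (ψ l).eval 0 • un + Δt • ∑ m, Lam l m • g m) :
    ∑ m, (ψ m).eval 1 • u m = un + Δt • ∑ m, w m • g m := by
  have hdeg (l) : (ψ l).degree < Fintype.card (Fin (M + 1)) := by
    rw [Fintype.card_fin]
    exact degree_le_natDegree.trans_lt (by exact_mod_cast Nat.lt_succ_of_le (hψdeg l))
  have hone : 1 ∈ Submodule.span ℝ (Set.range ψ) :=
    mem_span_nodal hξmono.injective hdeg hψeval <|
      degree_one.trans_lt (by exact_mod_cast Fintype.card_pos)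
  simp only [hB, hLam, ← aderForm_apply] at hsys
  simp only [← massForm_apply] at hsys
  simpa only [hw] using ader_iwf_final_update_general hone hsys
end

section
/- The ADER matrices satisfy Λ·𝟙 = B·β, i.e. for every ℓ ∈ {0,…,M}: Σ_{m=0}^{M} Λ_{ℓm} = Σ_{m=0}^{M} B_{ℓm}·ξᵐ (both sides being equal to ∫₀¹ ψ̂ˡ(ξ) dξ). Consequently, if B is invertible, the Runge–Kutta matrix A = B⁻¹Λ satisfies Σ_{j=0}^{M} A_{ij} = ξⁱ for every i, i.e. the row sums of A equal the corresponding abscissae. -/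
/-!
For coefficients `c`, put `p = ∑ₘ cₘ ψᵐ`. Then `(Λ c)ₗ = ∫ ψˡ p`, and integration by parts gives
`(B c)ₗ = ψˡ(a) p(a) + ∫ ψˡ p'`. So `B` applied to the coefficients of a `p` vanishing at `a` is
`Λ` applied to the coefficients of `p'`; since `∑ₘ ψᵐ = 1` and `∑ₘ ξᵐ ψᵐ = X`, the choice
`p = X - a`, `p' = 1` gives the row sums.
-/

section ADER

open Polynomial Matrix

theorem sum_eval_smul_eq_of_eval_eq_ite {R ι : Type*} [CommRing R] [IsDomain R] [Fintype ι]
    [DecidableEq ι] {ξ : ι → R} {ψ : ι → R[X]} (hξ : Function.Injective ξ)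
    (hdeg : ∀ l, (ψ l).degree < Fintype.card ι)
    (heval : ∀ l m, (ψ l).eval (ξ m) = if l = m then 1 else 0)
    {p : R[X]} (hp : p.degree < Fintype.card ι) :
    ∑ m, p.eval (ξ m) • ψ m = p := by
  have hsum : (∑ m, p.eval (ξ m) • ψ m).degree < Fintype.card ι :=
    mem_degreeLT.1 <| Submodule.sum_mem _ fun m _ =>
      Submodule.smul_mem _ _ (mem_degreeLT.2 (hdeg m))
  refine eq_of_degrees_lt_of_eval_index_eq Finset.univ hξ.injOn hsum hp fun i _ => ?_
  simp [eval_finsetSum, heval]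

theorem integral_eval_mul_derivative_eval (p q : ℝ[X]) (a b : ℝ) :
    ∫ x in a..b, q.eval x * p.derivative.eval x =
      q.eval b * p.eval b - q.eval a * p.eval a - ∫ x in a..b, q.derivative.eval x * p.eval x :=
  intervalIntegral.integral_mul_deriv_eq_deriv_mul
    (fun x _ => q.hasDerivAt x) (fun x _ => p.hasDerivAt x)
    (q.derivative.continuous.intervalIntegrable _ _)
    (p.derivative.continuous.intervalIntegrable _ _)

variable {ι : Type*}

/-- The mass matrix `Λ` of a family of polynomials on the interval from `a` to `b`. -/
noncomputable def massMatrix (ψ : ι → ℝ[X]) (a b : ℝ) : Matrix ι ι ℝ :=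
  .of fun l m => ∫ x in a..b, (ψ l).eval x * (ψ m).eval x

/-- The ADER matrix `B` of a family of polynomials on the interval from `a` to `b`: the weak form
of `d/dt` tested against the family, in which the boundary term at `a` is left to the initial
datum. -/
noncomputable def aderMatrix (ψ : ι → ℝ[X]) (a b : ℝ) : Matrix ι ι ℝ :=
  .of fun l m => (ψ l).eval b * (ψ m).eval b -
    ∫ x in a..b, (ψ l).derivative.eval x * (ψ m).eval x

variable [Fintype ι]

theorem sum_integral_eval_mul_eval_mul (q : ℝ[X]) (ψ : ι → ℝ[X]) (a b : ℝ) (c : ι → ℝ) :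
    ∑ m, (∫ x in a..b, q.eval x * (ψ m).eval x) * c m =
      ∫ x in a..b, q.eval x * (∑ m, c m • ψ m).eval x := by
  simp only [← intervalIntegral.integral_mul_const]
  rw [← intervalIntegral.integral_finsetSum fun m _ =>
    Continuous.intervalIntegrable (by fun_prop) a b]
  simp only [eval_finsetSum, eval_smul, smul_eq_mul, Finset.mul_sum, mul_assoc, mul_comm (c _)]

variable (ψ : ι → ℝ[X]) (a b : ℝ)

theorem massMatrix_mulVec_apply (c : ι → ℝ) (l : ι) :
    (massMatrix ψ a b *ᵥ c) l = ∫ x in a..b, (ψ l).eval x * (∑ m, c m • ψ m).eval x :=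
  sum_integral_eval_mul_eval_mul (ψ l) ψ a b c

theorem aderMatrix_mulVec_apply (c : ι → ℝ) (l : ι) :
    (aderMatrix ψ a b *ᵥ c) l = (ψ l).eval a * (∑ m, c m • ψ m).eval a +
      ∫ x in a..b, (ψ l).eval x * (∑ m, c m • ψ m).derivative.eval x := by
  have boundary : ∑ m, (ψ l).eval b * (ψ m).eval b * c m =
      (ψ l).eval b * (∑ m, c m • ψ m).eval b := by
    simp only [eval_finsetSum, eval_smul, smul_eq_mul, Finset.mul_sum, mul_assoc, mul_comm (c _)]
  calc (aderMatrix ψ a b *ᵥ c) l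
    _ = (ψ l).eval b * (∑ m, c m • ψ m).eval b -
          ∫ x in a..b, (ψ l).derivative.eval x * (∑ m, c m • ψ m).eval x := by
      simp only [aderMatrix, mulVec, dotProduct, of_apply, sub_mul, Finset.sum_sub_distrib,
        boundary, sum_integral_eval_mul_eval_mul]
    _ = _ := by
      rw [integral_eval_mul_derivative_eval]
      ring

variable {ψ} {c d ξ : ι → ℝ}

theorem aderMatrix_mulVec_eq_massMatrix_mulVec (hzero : (∑ m, c m • ψ m).eval a = 0)
    (hderiv : (∑ m, c m • ψ m).derivative = ∑ m, d m • ψ m) :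
    aderMatrix ψ a b *ᵥ c = massMatrix ψ a b *ᵥ d := by
  ext l
  rw [aderMatrix_mulVec_apply, massMatrix_mulVec_apply, hzero, hderiv, mul_zero, zero_add]

theorem sum_massMatrix_apply (hone : ∑ m, ψ m = 1) (l : ι) :
    ∑ m, massMatrix ψ a b l m = ∫ x in a..b, (ψ l).eval x := by
  calc ∑ m, massMatrix ψ a b l m
    _ = (massMatrix ψ a b *ᵥ 1) l := (dotProduct_one _).symm
    _ = ∫ x in a..b, (ψ l).eval x := by simp [massMatrix_mulVec_apply, hone]

theorem aderMatrix_mulVec_sub_eq_massMatrix_mulVec_one (hone : ∑ m, ψ m = 1)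
    (hX : ∑ m, ξ m • ψ m = X) :
    aderMatrix ψ a b *ᵥ (fun m => ξ m - a) = massMatrix ψ a b *ᵥ 1 := by
  have hshift : ∑ m, (ξ m - a) • ψ m = X - C a := by
    simp only [sub_smul, Finset.sum_sub_distrib, hX, ← Finset.smul_sum, hone]
    rw [smul_eq_C_mul, mul_one]
  apply aderMatrix_mulVec_eq_massMatrix_mulVec <;> simp [hshift, hone]

theorem ader_row_sums_are_abscissae_general [DecidableEq ι] (hone : ∑ m, ψ m = 1)
    (hX : ∑ m, ξ m • ψ m = X) :
    (∀ l, ∑ m, massMatrix ψ a b l m = ∑ m, aderMatrix ψ a b l m * (ξ m - a)) ∧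
    (∀ l, ∑ m, massMatrix ψ a b l m = ∫ x in a..b, (ψ l).eval x) ∧
    (IsUnit (aderMatrix ψ a b).det →
      ∀ i, ∑ j, ((aderMatrix ψ a b)⁻¹ * massMatrix ψ a b) i j = ξ i - a) := by
  have hvec := aderMatrix_mulVec_sub_eq_massMatrix_mulVec_one a b hone hX
  refine ⟨fun l => ?_, sum_massMatrix_apply a b hone, fun hB i => ?_⟩
  · rw [← dotProduct_one]
    exact (congrFun hvec l).symm
  · have hsolve : ((aderMatrix ψ a b)⁻¹ * massMatrix ψ a b) *ᵥ 1 = fun m => ξ m - a := by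
      rw [← mulVec_mulVec, ← hvec, mulVec_mulVec, nonsing_inv_mul _ hB, one_mulVec]
    rw [← dotProduct_one]
    exact congrFun hsolve i

end ADER

/-- Λ·𝟙 = B·β, both sides equalling ∫₀¹ ψ̂ˡ; consequently the row sums of A = B⁻¹Λ are
the abscissae ξⁱ. -/
theorem ader_row_sums_are_abscissae
    (M : ℕ) (hM : 1 ≤ M)
    (ξ : Fin (M + 1) → ℝ)
    (hξ01 : ∀ m, ξ m ∈ Set.Icc (0 : ℝ) 1)
    (hξmono : StrictMono ξ)
    (ψ : Fin (M + 1) → Polynomial ℝ)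
    (hψdeg : ∀ l, (ψ l).natDegree ≤ M)
    (hψeval : ∀ l m, (ψ l).eval (ξ m) = if l = m then 1 else 0)
    (Bmat Lam : Matrix (Fin (M + 1)) (Fin (M + 1)) ℝ)
    (hB : ∀ l m, Bmat l m = (ψ l).eval 1 * (ψ m).eval 1 -
        ∫ x in (0 : ℝ)..1, (ψ l).derivative.eval x * (ψ m).eval x)
    (hLam : ∀ l m, Lam l m = ∫ x in (0 : ℝ)..1, (ψ l).eval x * (ψ m).eval x)
    (w : Fin (M + 1) → ℝ)
    (hw : ∀ m, w m = ∫ x in (0 : ℝ)..1, (ψ m).eval x) :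
    (∀ l, ∑ m, Lam l m = ∑ m, Bmat l m * ξ m) ∧
    (∀ l, ∑ m, Lam l m = ∫ x in (0 : ℝ)..1, (ψ l).eval x) ∧
    (IsUnit Bmat.det → ∀ i, ∑ j, (Bmat⁻¹ * Lam) i j = ξ i) := by
  obtain rfl : Bmat = aderMatrix ψ 0 1 := Matrix.ext hB
  obtain rfl : Lam = massMatrix ψ 0 1 := Matrix.ext hLam
  have hdegree (p : Polynomial ℝ) (hp : p.natDegree ≤ M) :
      p.degree < Fintype.card (Fin (M + 1)) := by
    rw [Fintype.card_fin]
    exact (Polynomial.degree_le_of_natDegree_le hp).trans_lt (mod_cast M.lt_succ_self)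
  have hreproduce (p : Polynomial ℝ) (hp : p.natDegree ≤ M) : ∑ m, p.eval (ξ m) • ψ m = p :=
    sum_eval_smul_eq_of_eval_eq_ite hξmono.injective (fun l => hdegree _ (hψdeg l)) hψeval
      (hdegree p hp)
  have hone : ∑ m, ψ m = 1 := by simpa using hreproduce 1 (by simp)
  have hX : ∑ m, ξ m • ψ m = Polynomial.X := by simpa using hreproduce Polynomial.X (by simpa)
  simpa only [sub_zero] using ader_row_sums_are_abscissae_general 0 1 hone hX
end

section
/- Let x₀,…,x_K ∈ [0,1] and ω₀,…,ω_K ∈ ℝ be a quadrature rule with degree of exactness at least 2M−1, i.e. Σ_{q=0}^{K} ω_q p(x_q) = ∫₀¹ p(ξ) dξ for every polynomial p of degree ≤ 2M−1, and define the quadrature mass matrix Λ^Q by Λ^Q_{ℓm} = Σ_{q=0}^{K} ω_q ψ̂ˡ(x_q) ψ̂ᵐ(x_q). Then the Runge–Kutta simplifying condition C(M) holds for the ADER scheme: for every z with 1 ≤ z ≤ M and every ℓ ∈ {0,…,M}, Σ_{m=0}^{M} Λ^Q_{ℓm} (ξᵐ)^{z−1} = (1/z) Σ_{m=0}^{M}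 B_{ℓm} (ξᵐ)^{z}. -/
/-!
Condition C(M) is integration by parts. Evaluation, integration over an interval and quadrature are
linear functionals `φ` on polynomials, and each turns interpolation `p = ∑ m, p(ξᵐ) ψᵐ` into
`∑ m, φ (f * ψᵐ) * p(ξᵐ) = φ (f * p)`. Hence, for `deg p ≤ M`, the quadrature mass matrix sends the
nodal values of `p'` to the quadrature of `ψˡ p'`, which is exact because `deg (ψˡ p') ≤ 2M - 1`,
while `B` sends the nodal values of `p` to `ψˡ(1) p(1) - ∫ (ψˡ)' p`. The two differ only by the
boundary term `ψˡ(0) p(0)`, which vanishes for `p = X ^ z / z` with `z ≥ 1`.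
-/

section

open Polynomial

section Interpolation

variable {F ι : Type*} [Field F] [DecidableEq ι] {s : Finset ι} {v : ι → F}

theorem eq_lagrange_basis_of_eval_eq_ite {i : ι} {f : F[X]} (hv : Set.InjOn v s) (hi : i ∈ s)
    (hdeg : f.degree < s.card) (heval : ∀ j ∈ s, f.eval (v j) = if i = j then 1 else 0) :
    f = Lagrange.basis s v i := by
  have hbasis : (Lagrange.basis s v i).degree < s.card := by
    rw [Lagrange.degree_basis hv hi]
    exact_mod_cast Nat.sub_lt (Finset.card_pos.mpr ⟨i, hi⟩) one_pos
  refine eq_of_degrees_lt_of_eval_index_eq s hv hdeg hbasis fun j hj ↦ ?_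
  rw [heval j hj]
  split_ifs with hij
  · rw [← hij, Lagrange.eval_basis_self hv hi]
  · rw [Lagrange.eval_basis_of_ne hij hj]

theorem sum_map_mul_lagrange_basis_mul_eval {p : F[X]} (hv : Set.InjOn v s)
    (hp : p.degree < s.card) (φ : F[X] →ₗ[F] F) (f : F[X]) :
    ∑ i ∈ s, φ (f * Lagrange.basis s v i) * p.eval (v i) = φ (f * p) := by
  conv_rhs =>
    rw [Lagrange.eq_interpolate hv hp, Lagrange.interpolate_apply, Finset.mul_sum, map_sum]
  refine Finset.sum_congr rfl fun i _ ↦ ?_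
  rw [← smul_eq_C_mul, mul_smul_comm, map_smul, smul_eq_mul, mul_comm]

end Interpolation

/-- The quadrature rule with nodes `x` and weights `ω`, as a linear functional on polynomials. -/
noncomputable def polynomialQuadrature {R κ : Type*} [CommSemiring R] [Fintype κ] (x ω : κ → R) :
    R[X] →ₗ[R] R :=
  ∑ q, ω q • leval (x q)

theorem polynomialQuadrature_apply {R κ : Type*} [CommSemiring R] [Fintype κ] (x ω : κ → R)
    (p : R[X]) : polynomialQuadrature x ω p = ∑ q, ω q * p.eval (x q) := by
  simp [polynomialQuadrature]

theorem intervalIntegrable_polynomial_eval (p : ℝ[X]) (a b : ℝ) :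
    IntervalIntegrable (fun t ↦ p.eval t) MeasureTheory.volume a b :=
  p.continuous.intervalIntegrable a b

/-- Integration from `a` to `b`, as a linear functional on polynomials. -/
noncomputable def polynomialIntegral (a b : ℝ) : ℝ[X] →ₗ[ℝ] ℝ where
  toFun p := ∫ t in a..b, p.eval t
  map_add' p q := by
    simp only [eval_add]
    exact intervalIntegral.integral_add (intervalIntegrable_polynomial_eval p a b)
      (intervalIntegrable_polynomial_eval q a b)
  map_smul' c p := by simp

theorem polynomialIntegral_apply (a b : ℝ) (p : ℝ[X]) :
    polynomialIntegral a b p = ∫ t in a..b, p.eval t :=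
  rfl

theorem polynomialIntegral_derivative (a b : ℝ) (p : ℝ[X]) :
    polynomialIntegral a b (derivative p) = p.eval b - p.eval a :=
  intervalIntegral.integral_eq_sub_of_hasDerivAt (fun t _ ↦ p.hasDerivAt t)
    (intervalIntegrable_polynomial_eval _ a b)

theorem polynomialIntegral_mul_derivative (a b : ℝ) (f p : ℝ[X]) :
    polynomialIntegral a b (f * derivative p) =
      f.eval b * p.eval b - f.eval a * p.eval a - polynomialIntegral a b (derivative f * p) := by
  have h := polynomialIntegral_derivative a b (f * p)
  rw [derivative_mul, map_add, eval_mul, eval_mul] at h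
  exact eq_sub_of_add_eq' h

theorem ader_simplifying_condition_C_general {ι κ : Type*} [Fintype ι] [DecidableEq ι] [Fintype κ]
    {M : ℕ} (hcard : Fintype.card ι = M + 1) {a b : ℝ} {ξ : ι → ℝ} (hξ : Function.Injective ξ)
    {ψ : ι → ℝ[X]} (hψdeg : ∀ l, (ψ l).natDegree ≤ M)
    (hψeval : ∀ l m, (ψ l).eval (ξ m) = if l = m then 1 else 0)
    {B LamQ : Matrix ι ι ℝ}
    (hB : ∀ l m, B l m = (ψ l).eval b * (ψ m).eval b -
      ∫ t in a..b, (ψ l).derivative.eval t * (ψ m).eval t)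
    {x ω : κ → ℝ}
    (hexact : ∀ p : ℝ[X], p.natDegree ≤ 2 * M - 1 →
      ∑ q, ω q * p.eval (x q) = ∫ t in a..b, p.eval t)
    (hLamQ : ∀ l m, LamQ l m = ∑ q, ω q * (ψ l).eval (x q) * (ψ m).eval (x q))
    {p : ℝ[X]} (hp : p.natDegree ≤ M) (l : ι) :
    ∑ m, LamQ l m * (derivative p).eval (ξ m) =
      ∑ m, B l m * p.eval (ξ m) - (ψ l).eval a * p.eval a := by
  have degree_lt {f : ℝ[X]} (hf : f.natDegree ≤ M) : f.degree < (Finset.univ : Finset ι).card := by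
    rw [Finset.card_univ, hcard]
    exact degree_le_natDegree.trans_lt (by exact_mod_cast Nat.lt_succ_of_le hf)
  obtain rfl : ψ = Lagrange.basis Finset.univ ξ := funext fun m ↦
    eq_lagrange_basis_of_eval_eq_ite hξ.injOn (Finset.mem_univ m) (degree_lt (hψdeg m))
      fun j _ ↦ hψeval m j
  set ψ := Lagrange.basis Finset.univ ξ
  have nodal_sum (φ : ℝ[X] →ₗ[ℝ] ℝ) (f : ℝ[X]) {r : ℝ[X]} (hr : r.natDegree ≤ M) :
      ∑ m, φ (f * ψ m) * r.eval (ξ m) = φ (f * r) :=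
    sum_map_mul_lagrange_basis_mul_eval hξ.injOn (degree_lt hr) φ f
  have hp' : (derivative p).natDegree ≤ M - 1 :=
    (natDegree_derivative_le p).trans (Nat.sub_le_sub_right hp 1)
  have hLamQ_sum : ∑ m, LamQ l m * (derivative p).eval (ξ m) =
      polynomialQuadrature x ω (ψ l * derivative p) := by
    rw [← nodal_sum _ _ (hp'.trans (Nat.sub_le M 1))]
    simp only [hLamQ, polynomialQuadrature_apply, eval_mul, mul_assoc]
  have hB_sum : ∑ m, B l m * p.eval (ξ m) =
      (ψ l).eval b * p.eval b - polynomialIntegral a b (derivative (ψ l) * p) := by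
    rw [← eval_mul, ← leval_apply, ← nodal_sum _ _ hp, ← nodal_sum _ _ hp, ← Finset.sum_sub_distrib]
    simp only [hB, leval_apply, polynomialIntegral_apply, eval_mul, sub_mul]
  have quadrature_exact : polynomialQuadrature x ω (ψ l * derivative p) =
      polynomialIntegral a b (ψ l * derivative p) := by
    rw [polynomialQuadrature_apply, polynomialIntegral_apply]
    exact hexact _ (natDegree_mul_le.trans (by have := hψdeg l; omega))
  rw [hLamQ_sum, quadrature_exact, polynomialIntegral_mul_derivative, hB_sum]
  ring

end

/-- Runge–Kutta simplifying condition C(M) for the ADER scheme with a quadrature of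
degree of exactness at least 2M−1. -/
theorem ader_simplifying_condition_C
    (M : ℕ) (hM : 1 ≤ M)
    (ξ : Fin (M + 1) → ℝ)
    (hξ01 : ∀ m, ξ m ∈ Set.Icc (0 : ℝ) 1)
    (hξmono : StrictMono ξ)
    (ψ : Fin (M + 1) → Polynomial ℝ)
    (hψdeg : ∀ l, (ψ l).natDegree ≤ M)
    (hψeval : ∀ l m, (ψ l).eval (ξ m) = if l = m then 1 else 0)
    (Bmat Lam : Matrix (Fin (M + 1)) (Fin (M + 1)) ℝ)
    (hB : ∀ l m, Bmat l m = (ψ l).eval 1 * (ψ m).eval 1 -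
        ∫ x in (0 : ℝ)..1, (ψ l).derivative.eval x * (ψ m).eval x)
    (hLam : ∀ l m, Lam l m = ∫ x in (0 : ℝ)..1, (ψ l).eval x * (ψ m).eval x)
    (w : Fin (M + 1) → ℝ)
    (hw : ∀ m, w m = ∫ x in (0 : ℝ)..1, (ψ m).eval x)
    (K : ℕ) (x : Fin (K + 1) → ℝ) (ω : Fin (K + 1) → ℝ)
    (hx01 : ∀ q, x q ∈ Set.Icc (0 : ℝ) 1)
    (hexact : ∀ p : Polynomial ℝ, p.natDegree ≤ 2 * M - 1 →
      ∑ q, ω q * p.eval (x q) = ∫ t in (0 : ℝ)..1, p.eval t)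
    (LamQ : Matrix (Fin (M + 1)) (Fin (M + 1)) ℝ)
    (hLamQ : ∀ l m, LamQ l m = ∑ q, ω q * (ψ l).eval (x q) * (ψ m).eval (x q)) :
    ∀ z : ℕ, 1 ≤ z → z ≤ M → ∀ l,
      ∑ m, LamQ l m * ξ m ^ (z - 1) = (1 / (z : ℝ)) * ∑ m, Bmat l m * ξ m ^ z := by
  intro z hz hzM l
  have hz0 : z ≠ 0 := Nat.one_le_iff_ne_zero.mp hz
  simpa [Polynomial.derivative_monomial, hz0, Finset.mul_sum, mul_left_comm] using
    ader_simplifying_condition_C_general (Fintype.card_fin _) hξmono.injective hψdeg hψeval hB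
      hexact hLamQ (p := Polynomial.monomial z (1 / (z : ℝ)))
      ((Polynomial.natDegree_monomial_le _).trans hzM) l
end
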